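/- Let b : ℝ^d → ℝ^d, σ : ℝ^d → ℝ^{d×d} and g : ℝ^d × U → ℝ^d satisfy: (i) the local one-sided Lipschitz condition: for every R > 0 there exists C_R > 0 such that for all x, y ∈ ℝ^d with |x| ≤ R and |y| ≤ R one has ⟨b(x) − b(y), x − y⟩ + ‖σ(x) − σ(y)‖²_HS + ∫_U |g(x,u) − g(y,u)|² ν(du) ≤ C_R |x − y|²; and (ii) local boundedness: for every R > 0 there exists M_R > 0 such that for all x with |x| ≤ R one has |b(x)|² + ‖σ(x)‖²_HS + ∫_U |g(x,u)|² ν(du) ≤ M_R. Then for every R > 0 there exist functions b_R : ℝ^d → ℝ^d, σ_R : ℝ^d → ℝ^{d×d}, g_R : ℝ^d × U → ℝ^d such that: b_R(x) = b(x), σ_R(x) = σ(x) and g_R(x,u) = g(x,u) for all u whenever |x| ≤ R; there exists a constant C(R) > 0 such that for ALL x, y ∈ ℝ^d one has ⟨b_R(x) − b_R(y), x − y⟩ + ‖σ_R(x) − σ_R(y)‖²_HS + ∫_U |g_R(x,u) − g_R(y,u)|² ν(du) ≤ C(R) |x − y|²; and there exists M(R) > 0 such that for all x ∈ ℝ^d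 one has |b_R(x)|² + ‖σ_R(x)‖²_HS + ∫_U |g_R(x,u)|² ν(du) ≤ M(R). -/

import Mathlib

/-!
All three coefficients are multiplied by the same radial cutoff `1 - t(x)²`, where
`t(x) = min 1 (max 0 (|x| - R))` is `1`-Lipschitz; the cutoff equals `1` on `|x| ≤ R` and vanishes for
`|x| ≥ R + 1`.

The difficulty is that `|σ(x) - σ(y)|²` alone need not be `O(|x - y|²)`: it is only controlled together
with the drift term. Hence the truncated noise terms must be estimated with the factor of
`|σ(x) - σ(y)|²` no larger than the factor `1 - t(x)²` that multiplies the drift increment, and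
the cross term must cost only `O(|x - y|²)`. Both are achieved because the cutoff is *quadratically*
flat at its maximum: for `0 ≤ s ≤ t ≤ 1`,
`‖(1 - t²) a - (1 - s²) c‖² ≤ (1 - t²) ‖a - c‖² + 4 (t - s)² ‖c‖²` (`cutoff_sq_le`).
By symmetry one may take `t(y) ≤ t(x)`, and then `(1 - t(x)²)` times the one-sided Lipschitz bound on
the ball of radius `R + 1`, plus the local bound at `y`, gives the global one-sided bound.
-/

open MeasureTheory
open scoped RealInnerProductSpace

/-- Squared Hilbert-Schmidt (Frobenius) norm of a real d×d matrix. -/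
noncomputable def HSnormSq {d : ℕ} (A : Matrix (Fin d) (Fin d) ℝ) : ℝ :=
  ∑ i, ∑ j, (A i j) ^ 2

/-- The quadratically flat cutoff inequality. The defect of the scalar inequality behind it is
`(1 - t²) (t ‖a - c‖ - 2 (t - s) ‖c‖)²`. -/
lemma cutoff_sq_le {E : Type*} [SeminormedAddCommGroup E] [NormedSpace ℝ E] {s t : ℝ}
    (hs : 0 ≤ s) (hst : s ≤ t) (ht : t ≤ 1) (a c : E) :
    ‖(1 - t ^ 2) • a - (1 - s ^ 2) • c‖ ^ 2
      ≤ (1 - t ^ 2) * ‖a - c‖ ^ 2 + 4 * (t - s) ^ 2 * ‖c‖ ^ 2 := by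
  have hp : 0 ≤ 1 - t ^ 2 := by nlinarith
  have hq : 0 ≤ t ^ 2 - s ^ 2 := by nlinarith
  have hq' : t ^ 2 - s ^ 2 ≤ t * (2 * (t - s)) := by nlinarith
  have h1 : ‖(1 - t ^ 2) • a - (1 - s ^ 2) • c‖
      ≤ (1 - t ^ 2) * ‖a - c‖ + t * (2 * (t - s) * ‖c‖) := by
    have e : (1 - t ^ 2) • a - (1 - s ^ 2) • c
        = (1 - t ^ 2) • (a - c) - (t ^ 2 - s ^ 2) • c := by module
    rw [e]
    refine (norm_sub_le _ _).trans ?_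
    rw [norm_smul, norm_smul, Real.norm_of_nonneg hp, Real.norm_of_nonneg hq]
    have := mul_le_mul_of_nonneg_right hq' (norm_nonneg c)
    linarith
  refine (pow_le_pow_left₀ (norm_nonneg _) h1 2).trans ?_
  have := mul_nonneg hp (sq_nonneg (t * ‖a - c‖ - 2 * (t - s) * ‖c‖))
  linear_combination this

lemma HSnormSq_nonneg {d : ℕ} (A : Matrix (Fin d) (Fin d) ℝ) : 0 ≤ HSnormSq A :=
  Finset.sum_nonneg fun _ _ => Finset.sum_nonneg fun _ _ => sq_nonneg _

lemma HSnormSq_smul {d : ℕ} (r : ℝ) (A : Matrix (Fin d) (Fin d) ℝ) :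
    HSnormSq (r • A) = r ^ 2 * HSnormSq A := by
  simp [HSnormSq, Finset.mul_sum, mul_pow]

lemma HSnormSq_sub_comm {d : ℕ} (A B : Matrix (Fin d) (Fin d) ℝ) :
    HSnormSq (A - B) = HSnormSq (B - A) := by
  simp only [HSnormSq, Matrix.sub_apply, sub_sq_comm]

lemma HSnormSq_cutoff_le {d : ℕ} {s t : ℝ} (hs : 0 ≤ s) (hst : s ≤ t) (ht : t ≤ 1)
    (A B : Matrix (Fin d) (Fin d) ℝ) :
    HSnormSq ((1 - t ^ 2) • A - (1 - s ^ 2) • B)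
      ≤ (1 - t ^ 2) * HSnormSq (A - B) + 4 * (t - s) ^ 2 * HSnormSq B := by
  simp only [HSnormSq, Finset.mul_sum, ← Finset.sum_add_distrib]
  refine Finset.sum_le_sum fun i _ => Finset.sum_le_sum fun j _ => ?_
  simpa using cutoff_sq_le hs hst ht (A i j) (B i j)

lemma integrable_sub_sq {U E : Type*} [MeasurableSpace U] [NormedAddCommGroup E] {ν : Measure U}
    {f h : U → E}
    (hf : AEStronglyMeasurable f ν) (hh : AEStronglyMeasurable h ν)
    (hf2 : Integrable (fun u => ‖f u‖ ^ 2) ν) (hh2 : Integrable (fun u => ‖h u‖ ^ 2) ν) :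
    Integrable (fun u => ‖f u - h u‖ ^ 2) ν :=
  (memLp_two_iff_integrable_sq_norm (hf.sub hh)).1
    (((memLp_two_iff_integrable_sq_norm hf).2 hf2).sub
      ((memLp_two_iff_integrable_sq_norm hh).2 hh2))

lemma integral_cutoff_le {U E : Type*} [MeasurableSpace U] [NormedAddCommGroup E]
    [NormedSpace ℝ E] {ν : Measure U} {s t : ℝ} (hs : 0 ≤ s) (hst : s ≤ t) (ht : t ≤ 1)
    {f h : U → E}
    (hf : AEStronglyMeasurable f ν) (hh : AEStronglyMeasurable h ν)
    (hf2 : Integrable (fun u => ‖f u‖ ^ 2) ν) (hh2 : Integrable (fun u => ‖h u‖ ^ 2) ν) :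
    ∫ u, ‖(1 - t ^ 2) • f u - (1 - s ^ 2) • h u‖ ^ 2 ∂ν
      ≤ (1 - t ^ 2) * ∫ u, ‖f u - h u‖ ^ 2 ∂ν + 4 * (t - s) ^ 2 * ∫ u, ‖h u‖ ^ 2 ∂ν := by
  have h1 := (integrable_sub_sq hf hh hf2 hh2).const_mul (1 - t ^ 2)
  have h2 := hh2.const_mul (4 * (t - s) ^ 2)
  rw [← integral_const_mul, ← integral_const_mul, ← integral_add h1 h2]
  exact integral_mono_of_nonneg (.of_forall fun _ => sq_nonneg _) (h1.add h2)
    (.of_forall fun u => cutoff_sq_le hs hst ht (f u) (h u))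

lemma inner_cutoff_le {E : Type*} [NormedAddCommGroup E] [InnerProductSpace ℝ E] {s t M : ℝ}
    (hs : 0 ≤ s) (hst : s ≤ t) (ht : t ≤ 1) (a c z : E) (htz : t - s ≤ ‖z‖)
    (hM : ‖c‖ ^ 2 ≤ M) :
    ⟪(1 - t ^ 2) • a - (1 - s ^ 2) • c, z⟫
      ≤ (1 - t ^ 2) * ⟪a - c, z⟫ + (1 + M) * ‖z‖ ^ 2 := by
  have e : (1 - t ^ 2) • a - (1 - s ^ 2) • c
      = (1 - t ^ 2) • (a - c) - (t ^ 2 - s ^ 2) • c := by module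
  rw [e, inner_sub_left, real_inner_smul_left, real_inner_smul_left]
  have hq : 0 ≤ t ^ 2 - s ^ 2 := by nlinarith
  have hq' : t ^ 2 - s ^ 2 ≤ 2 * ‖z‖ := by nlinarith
  have h1 : -⟪c, z⟫ ≤ ‖c‖ * ‖z‖ := (neg_le_abs _).trans (abs_real_inner_le_norm c z)
  have h2 := mul_le_mul_of_nonneg_left h1 hq
  have h3 := mul_le_mul_of_nonneg_right hq' (mul_nonneg (norm_nonneg c) (norm_nonneg z))
  have h4 : 2 * ‖c‖ ≤ 1 + M := by nlinarith [sq_nonneg (‖c‖ - 1)]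
  have h5 := mul_le_mul_of_nonneg_right h4 (sq_nonneg ‖z‖)
  linarith

/-- The radial profile `min 1 (max 0 (|x| - R))`; the cutoff function is `1 - radialRamp R x ^ 2`. -/
noncomputable def radialRamp {E : Type*} [Norm E] (R : ℝ) (x : E) : ℝ :=
  min 1 (max 0 (‖x‖ - R))

section radialRamp

variable {E : Type*} [SeminormedAddCommGroup E] (R : ℝ) (x y : E)

lemma radialRamp_nonneg : 0 ≤ radialRamp R x := le_min zero_le_one (le_max_left _ _)

lemma radialRamp_le_one : radialRamp R x ≤ 1 := min_le_left _ _

lemma radialRamp_eq_zero {R : ℝ} {x : E} (h : ‖x‖ ≤ R) : radialRamp R x = 0 := by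
  simp [radialRamp, max_eq_left (sub_nonpos.2 h)]

lemma radialRamp_eq_one {R : ℝ} {x : E} (h : R + 1 < ‖x‖) : radialRamp R x = 1 :=
  min_eq_left (le_max_of_le_right (by linarith))

lemma radialRamp_sub_le : radialRamp R x - radialRamp R y ≤ ‖x - y‖ := by
  have h := norm_sub_norm_le x y
  have h0 := norm_nonneg (x - y)
  unfold radialRamp
  grind

end radialRamp

theorem truncated_coefficients {d : ℕ} {U : Type*} [MeasurableSpace U]
    (ν : Measure U) [SigmaFinite ν]
    (b : EuclideanSpace ℝ (Fin d) → EuclideanSpace ℝ (Fin d))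
    (σ : EuclideanSpace ℝ (Fin d) → Matrix (Fin d) (Fin d) ℝ)
    (g : EuclideanSpace ℝ (Fin d) → U → EuclideanSpace ℝ (Fin d))
    (hg_meas : ∀ x, Measurable (g x))
    (hg_int : ∀ x, Integrable (fun u => ‖g x u‖ ^ 2) ν)
    (hLOL : ∀ R > (0 : ℝ), ∃ C > (0 : ℝ), ∀ x y : EuclideanSpace ℝ (Fin d),
      ‖x‖ ≤ R → ‖y‖ ≤ R →
        ⟪b x - b y, x - y⟫ + HSnormSq (σ x - σ y)
          + ∫ u, ‖g x u - g y u‖ ^ 2 ∂ν ≤ C * ‖x - y‖ ^ 2)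
    (hLB : ∀ R > (0 : ℝ), ∃ M > (0 : ℝ), ∀ x : EuclideanSpace ℝ (Fin d), ‖x‖ ≤ R →
        ‖b x‖ ^ 2 + HSnormSq (σ x) + ∫ u, ‖g x u‖ ^ 2 ∂ν ≤ M) :
    ∀ R > (0 : ℝ),
      ∃ (bR : EuclideanSpace ℝ (Fin d) → EuclideanSpace ℝ (Fin d))
        (σR : EuclideanSpace ℝ (Fin d) → Matrix (Fin d) (Fin d) ℝ)
        (gR : EuclideanSpace ℝ (Fin d) → U → EuclideanSpace ℝ (Fin d)),
        (∀ x : EuclideanSpace ℝ (Fin d), ‖x‖ ≤ R →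
            bR x = b x ∧ σR x = σ x ∧ ∀ u, gR x u = g x u) ∧
        (∃ C > (0 : ℝ), ∀ x y : EuclideanSpace ℝ (Fin d),
            ⟪bR x - bR y, x - y⟫ + HSnormSq (σR x - σR y)
              + ∫ u, ‖gR x u - gR y u‖ ^ 2 ∂ν ≤ C * ‖x - y‖ ^ 2) ∧
        (∃ M > (0 : ℝ), ∀ x : EuclideanSpace ℝ (Fin d),
            ‖bR x‖ ^ 2 + HSnormSq (σR x) + ∫ u, ‖gR x u‖ ^ 2 ∂ν ≤ M) := by
  intro R hR
  obtain ⟨C, hC, hLip⟩ := hLOL (R + 1) (by linarith)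
  obtain ⟨M, hM, hBd⟩ := hLB (R + 1) (by linarith)
  have hI0 : ∀ x, 0 ≤ ∫ u, ‖g x u‖ ^ 2 ∂ν := fun x => integral_nonneg fun _ => sq_nonneg _
  refine ⟨fun x => (1 - radialRamp R x ^ 2) • b x, fun x => (1 - radialRamp R x ^ 2) • σ x,
    fun x u => (1 - radialRamp R x ^ 2) • g x u, ?_, ⟨C + 1 + 5 * M, by linarith, ?_⟩,
    ⟨M, hM, ?_⟩⟩
  · intro x hx
    simp [radialRamp_eq_zero hx]
  · intro x y
    wlog hst : radialRamp R y ≤ radialRamp R x generalizing x y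
    · have h := this y x (le_of_not_ge hst)
      rw [HSnormSq_sub_comm, norm_sub_rev x y, ← inner_neg_neg, neg_sub, neg_sub]
      simpa only [norm_sub_rev] using h
    have hs0 := radialRamp_nonneg R y
    have ht1 := radialRamp_le_one R x
    have hts := radialRamp_sub_le R x y
    by_cases hy : R + 1 < ‖y‖
    -- If `R + 1 < ‖y‖`, both cutoffs vanish.
    · have hs := radialRamp_eq_one hy
      have ht : radialRamp R x = 1 := le_antisymm ht1 (hs ▸ hst)
      simp only [hs, ht]
      simp only [one_pow, sub_self, zero_smul, inner_zero_left, norm_zero]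
      simp [HSnormSq]
      positivity
    · have hy' := not_lt.1 hy
      have hBy := hBd y hy'
      have hσ0 := HSnormSq_nonneg (σ y)
      have h1 := inner_cutoff_le (M := M) hs0 hst ht1 (b x) (b y) (x - y) hts
        (by linarith [hI0 y])
      have h2 := HSnormSq_cutoff_le hs0 hst ht1 (σ x) (σ y)
      have h3 := integral_cutoff_le hs0 hst ht1 (hg_meas x).aestronglyMeasurable
        (hg_meas y).aestronglyMeasurable (hg_int x) (hg_int y)
      have hp : 0 ≤ 1 - radialRamp R x ^ 2 := by nlinarith
      have h4 : (1 - radialRamp R x ^ 2) * (⟪b x - b y, x - y⟫ + HSnormSq (σ x - σ y)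
          + ∫ u, ‖g x u - g y u‖ ^ 2 ∂ν) ≤ C * ‖x - y‖ ^ 2 := by
        by_cases hx : R + 1 < ‖x‖
        · rw [radialRamp_eq_one hx]
          simp only [one_pow, sub_self, zero_mul]
          positivity
        · refine (mul_le_mul_of_nonneg_left (hLip x y (not_lt.1 hx) hy') hp).trans ?_
          refine mul_le_of_le_one_left (by positivity) ?_
          linarith [sq_nonneg (radialRamp R x)]
      have h5 : (radialRamp R x - radialRamp R y) ^ 2 * (HSnormSq (σ y) + ∫ u, ‖g y u‖ ^ 2 ∂ν)
          ≤ ‖x - y‖ ^ 2 * M :=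
        mul_le_mul (pow_le_pow_left₀ (sub_nonneg.2 hst) hts 2)
          (by linarith [sq_nonneg ‖b y‖]) (add_nonneg hσ0 (hI0 y)) (sq_nonneg _)
      linarith
  · intro x
    have ht0 := radialRamp_nonneg R x
    have ht1 := radialRamp_le_one R x
    simp only [norm_smul, mul_pow, HSnormSq_smul, integral_const_mul, Real.norm_eq_abs, sq_abs]
    by_cases hx : R + 1 < ‖x‖
    · rw [radialRamp_eq_one hx]
      simpa using hM.le
    · have hB := hBd x (not_lt.1 hx)
      have hp : (1 - radialRamp R x ^ 2) ^ 2 ≤ 1 := pow_le_one₀ (by nlinarith) (by nlinarith)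
      rw [← mul_add, ← mul_add]
      refine (mul_le_of_le_one_left ?_ hp).trans hB
      have := HSnormSq_nonneg (σ x)
      have := hI0 x
      positivity
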